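/- Consider observations y = Qf + ση ∈ ℝⁿ with Q ∈ ℝ^{n×n} invertible, Φ ∈ ℝ^{n×p} with ΦΦᵀ invertible, Ψ = Q(QᵀQ)⁻¹Φ with columns ψ_j and ν_j = ‖ψ_j‖₂, and z = (ΦΦᵀ)⁻¹ΦΨᵀy. Let θ̂ minimize ‖Φt − z‖₂² + 2α Σ_j ν_j|t_j| with α ≥ ᾱ₀ = σ√(2(τ+1) log p), τ > 0. If the noise event {for all j: |ψ_jᵀη| ≤ ν_j √(2(τ+1) log p)} holds, then for every t ∈ ℝᵖ: ‖f_θ̂ − f‖₂² + ‖Φ(θ̂ − t)‖₂² ≤ ‖f_t − f‖₂² + 2α Σ_j ν_j(|t_j| − |θ̂_j|) + 2ᾱ₀ Σ_j ν_j|θ̂_j − t_j|. -/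

import Mathlib

open MeasureTheory ProbabilityTheory Matrix Finset

noncomputable section

/-- Squared Euclidean norm of a vector. -/
def sqNorm {n : ℕ} (v : Fin n → ℝ) : ℝ := ∑ i, (v i)^2

/-!
The objective `t ↦ ‖Φ t - z‖² + g t`, with `g` convex, is strongly convex along `Φ`, so at every
`t` it exceeds its minimum, attained at `θ`, by at least `‖Φ (θ - t)‖²`. Since `z` is the signal `f`
plus the noise `w = σ (QᵀQ)⁻¹Qᵀη`, replacing `z` by `f` in both residuals costs exactly
`2 ⟪Φ (θ - t), w⟫ = 2 σ ∑ⱼ (θⱼ - tⱼ) ⟪ψⱼ, η⟫`, which the noise event bounds coordinatewise.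
-/

section QuadraticGrowth

open Filter Topology

variable {E F : Type*} [AddCommGroup E] [Module ℝ E] [NormedAddCommGroup F]

lemma add_modulus_le_of_isMinOn_comp_add [NormedSpace ℝ F] {A : E →ₗ[ℝ] F} {s : Set E} {S : Set F}
    {φ : ℝ → ℝ} {h : F → ℝ} {g : E → ℝ} {x y : E} (hh : UniformConvexOn S φ h)
    (hg : ConvexOn ℝ s g) (hA : Set.MapsTo A s S) (hmin : IsMinOn (fun t ↦ h (A t) + g t) s x)
    (hx : x ∈ s) (hy : y ∈ s) :
    h (A x) + g x + φ ‖A x - A y‖ ≤ h (A y) + g y := by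
  have along_segment : ∀ a ∈ Set.Ioo (0 : ℝ) 1,
      h (A x) + g x + a * φ ‖A x - A y‖ ≤ h (A y) + g y := by
    rintro a ⟨ha0, ha1⟩
    have hb : 0 < 1 - a := sub_pos.2 ha1
    have hmin_le := isMinOn_iff.1 hmin _
      (hg.1 hx hy ha0.le hb.le (add_sub_cancel a 1))
    have hh_le := hh.2 (hA hx) (hA hy) ha0.le hb.le (add_sub_cancel a 1)
    have hg_le := hg.2 hx hy ha0.le hb.le (add_sub_cancel a 1)
    simp only [map_add, map_smul, smul_eq_mul] at hmin_le hh_le hg_le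
    refine le_of_mul_le_mul_left ?_ hb
    linarith
  have hlim : Tendsto (fun a : ℝ ↦ h (A x) + g x + a * φ ‖A x - A y‖) (𝓝[<] 1)
      (𝓝 (h (A x) + g x + φ ‖A x - A y‖)) := by
    refine tendsto_nhdsWithin_of_tendsto_nhds (Continuous.tendsto' (by fun_prop) _ _ ?_)
    rw [one_mul]
  exact le_of_tendsto hlim <| eventually_of_mem (Ioo_mem_nhdsLT zero_lt_one) along_segment

variable [InnerProductSpace ℝ F]

lemma strongConvexOn_norm_sub_sq {S : Set F} (hS : Convex ℝ S) (z : F) :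
    StrongConvexOn S 2 fun u ↦ ‖u - z‖ ^ 2 := by
  have affine_part : ConvexOn ℝ S fun u ↦ (-2 : ℝ) * inner ℝ z u + ‖z‖ ^ 2 :=
    (((-2 : ℝ) • innerₗ F z).convexOn hS).add_const _
  refine strongConvexOn_iff_convex.2 (affine_part.congr fun u _ ↦ ?_)
  rw [norm_sub_sq_real, real_inner_comm]
  ring

lemma norm_sub_sq_add_le_of_isMinOn {A : E →ₗ[ℝ] F} {s : Set E} {g : E → ℝ} {x y : E} {v w : F}
    (hg : ConvexOn ℝ s g) (hmin : IsMinOn (fun t ↦ ‖A t - (v + w)‖ ^ 2 + g t) s x)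
    (hx : x ∈ s) (hy : y ∈ s) :
    ‖A x - v‖ ^ 2 + ‖A x - A y‖ ^ 2 + g x
      ≤ ‖A y - v‖ ^ 2 + g y + 2 * inner ℝ (A x - A y) w := by
  have growth := add_modulus_le_of_isMinOn_comp_add
    (strongConvexOn_norm_sub_sq convex_univ (v + w)) hg (Set.mapsTo_univ _ _) hmin hx hy
  have expand : ∀ u : F, ‖u - (v + w)‖ ^ 2 = ‖u - v‖ ^ 2 - 2 * inner ℝ (u - v) w + ‖w‖ ^ 2 :=
    fun u ↦ by rw [← sub_sub, norm_sub_sq_real]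
  have hinner : inner ℝ (A x - A y) w = inner ℝ (A x - v) w - inner ℝ (A y - v) w := by
    rw [← inner_sub_left, sub_sub_sub_cancel_right]
  simp only [expand] at growth
  linarith

end QuadraticGrowth

section Euclidean

variable {n : ℕ} {ι : Type*} [Fintype ι]

lemma sqNorm_eq_norm_toLp_sq (v : Fin n → ℝ) : sqNorm v = ‖WithLp.toLp 2 v‖ ^ 2 :=
  (EuclideanSpace.real_norm_sq_eq _).symm

lemma sqNorm_sub_add_le_of_isMinOn {Φ : Matrix (Fin n) ι ℝ} {g : (ι → ℝ) → ℝ} {s : Set (ι → ℝ)}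
    {x y : ι → ℝ} {v w : Fin n → ℝ} (hg : ConvexOn ℝ s g)
    (hmin : IsMinOn (fun t ↦ sqNorm (Φ *ᵥ t - (v + w)) + g t) s x) (hx : x ∈ s) (hy : y ∈ s) :
    sqNorm (Φ *ᵥ x - v) + sqNorm (Φ *ᵥ (x - y)) + g x
      ≤ sqNorm (Φ *ᵥ y - v) + g y + 2 * (Φ *ᵥ (x - y) ⬝ᵥ w) := by
  let A : (ι → ℝ) →ₗ[ℝ] EuclideanSpace ℝ (Fin n) :=
    (WithLp.linearEquiv 2 ℝ (Fin n → ℝ)).symm.toLinearMap ∘ₗ Φ.mulVecLin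
  have hA : ∀ t, A t = WithLp.toLp 2 (Φ *ᵥ t) := fun _ ↦ rfl
  simp only [sqNorm_eq_norm_toLp_sq, WithLp.toLp_sub, WithLp.toLp_add, mulVec_sub, ← hA] at hmin ⊢
  have hinner : inner ℝ (A x - A y) (WithLp.toLp 2 w) = (Φ *ᵥ x - Φ *ᵥ y) ⬝ᵥ w := by
    rw [hA, hA, ← WithLp.toLp_sub, EuclideanSpace.inner_toLp_toLp, star_trivial, dotProduct_comm]
  exact hinner ▸ norm_sub_sq_add_le_of_isMinOn hg hmin hx hy

lemma convexOn_sum_mul_abs {c : ι → ℝ} (hc : ∀ j, 0 ≤ c j) {s : Set (ι → ℝ)} (hs : Convex ℝ s) :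
    ConvexOn ℝ s fun t ↦ ∑ j, c j * |t j| := by
  refine ⟨hs, fun x _ y _ a b ha hb _ ↦ ?_⟩
  simp only [smul_eq_mul, Finset.mul_sum, ← Finset.sum_add_distrib]
  refine Finset.sum_le_sum fun j _ ↦ ?_
  calc c j * |a * x j + b * y j| ≤ c j * (a * |x j| + b * |y j|) := by
        gcongr
        · exact hc j
        · simpa only [abs_mul, abs_of_nonneg ha, abs_of_nonneg hb] using
            abs_add_le (a * x j) (b * y j)
    _ = a * (c j * |x j|) + b * (c j * |y j|) := by ring

lemma dotProduct_le_mul_sum_mul_abs {u v c : ι → ℝ} {r : ℝ} (hv : ∀ j, |v j| ≤ c j * r) :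
    u ⬝ᵥ v ≤ r * ∑ j, c j * |u j| := by
  rw [dotProduct, Finset.mul_sum]
  refine Finset.sum_le_sum fun j _ ↦ ?_
  calc u j * v j ≤ |u j| * |v j| := (le_abs_self _).trans (abs_mul _ _).le
    _ ≤ |u j| * (c j * r) := by gcongr; exact hv j
    _ = r * (c j * |u j|) := by ring

end Euclidean

section Pseudoinverse

variable {m n p R : Type*} [Fintype n] [DecidableEq n] [CommRing R]

lemma inv_mul_transpose_mul_mul_cancel [Fintype p] {Φ : Matrix n p R} (hΦ : IsUnit (Φ * Φᵀ).det)
    (B : Matrix n m R) : (Φ * Φᵀ)⁻¹ * Φ * (Φᵀ * B) = B := by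
  rw [← Matrix.mul_assoc, Matrix.mul_assoc _ Φ, nonsing_inv_mul _ hΦ, Matrix.one_mul]

variable [Fintype m]

/-- The left inverse `(QᵀQ)⁻¹Qᵀ` (Moore–Penrose over `ℝ`), which recovers a signal from its image
under `Q` in the least-squares sense; the value is `0` if `QᵀQ` is not invertible. -/
def leftPseudoinverse (Q : Matrix m n R) : Matrix n m R := (Qᵀ * Q)⁻¹ * Qᵀ

lemma leftPseudoinverse_mul_self {Q : Matrix m n R} (hQ : IsUnit (Qᵀ * Q).det) :
    leftPseudoinverse Q * Q = 1 := by
  rw [leftPseudoinverse, Matrix.mul_assoc, nonsing_inv_mul _ hQ]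

lemma transpose_mul_inv_mul_eq_mul_leftPseudoinverse (Q : Matrix m n R) (Φ : Matrix n p R) :
    (Q * (Qᵀ * Q)⁻¹ * Φ)ᵀ = Φᵀ * leftPseudoinverse Q := by
  simp only [leftPseudoinverse, transpose_mul, transpose_nonsing_inv, transpose_transpose]

end Pseudoinverse

theorem stmt_6_general {n : ℕ} {m ι : Type*} [Fintype m] [Fintype ι] (Q : Matrix m (Fin n) ℝ)
    (hQ : IsUnit (Qᵀ * Q).det) (Φ : Matrix (Fin n) ι ℝ) (hΦ : IsUnit (Φ * Φᵀ).det)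
    (Ψ : Matrix m ι ℝ) (hΨ : Ψ = Q * (Qᵀ * Q)⁻¹ * Φ) (ν : ι → ℝ) (hν : ∀ j, 0 ≤ ν j)
    (f : Fin n → ℝ) (η : m → ℝ) (σ : ℝ) (hσ : 0 ≤ σ) (y : m → ℝ) (z : Fin n → ℝ)
    (hy : y = Q *ᵥ f + σ • η) (hz : z = ((Φ * Φᵀ)⁻¹ * Φ * Ψᵀ) *ᵥ y) (α : ℝ) (hα : 0 ≤ α)
    (θ : ι → ℝ)
    (hmin : ∀ t, sqNorm (Φ *ᵥ θ - z) + 2 * α * ∑ j, ν j * |θ j| ≤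
      sqNorm (Φ *ᵥ t - z) + 2 * α * ∑ j, ν j * |t j|)
    (r : ℝ) (hnoise : ∀ j, |(fun i ↦ Ψ i j) ⬝ᵥ η| ≤ ν j * r) (t : ι → ℝ) :
    sqNorm (Φ *ᵥ θ - f) + sqNorm (Φ *ᵥ (θ - t)) ≤
      sqNorm (Φ *ᵥ t - f) + 2 * α * ∑ j, ν j * (|t j| - |θ j|) +
        2 * (σ * r) * ∑ j, ν j * |θ j - t j| := by
  have hΨ_transpose : Ψᵀ = Φᵀ * leftPseudoinverse Q := by
    rw [hΨ, transpose_mul_inv_mul_eq_mul_leftPseudoinverse]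
  have hz_signal_add_noise : z = f + σ • (leftPseudoinverse Q *ᵥ η) := by
    rw [hz, hΨ_transpose, inv_mul_transpose_mul_mul_cancel hΦ, hy, mulVec_add, mulVec_mulVec,
      leftPseudoinverse_mul_self hQ, one_mulVec, mulVec_smul]
  have hnoise_transport :
      Φ *ᵥ (θ - t) ⬝ᵥ leftPseudoinverse Q *ᵥ η = (θ - t) ⬝ᵥ Ψᵀ *ᵥ η := by
    rw [hΨ_transpose, ← mulVec_mulVec, dotProduct_mulVec (θ - t), vecMul_transpose]
  have hnoise_le : (θ - t) ⬝ᵥ Ψᵀ *ᵥ η ≤ r * ∑ j, ν j * |θ j - t j| :=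
    dotProduct_le_mul_sum_mul_abs hnoise
  have hpenalty : ConvexOn ℝ Set.univ fun u : ι → ℝ ↦ 2 * α * ∑ j, ν j * |u j| :=
    (convexOn_sum_mul_abs hν convex_univ).smul (by positivity)
  have basic := sqNorm_sub_add_le_of_isMinOn hpenalty
    (fun u _ ↦ hz_signal_add_noise ▸ hmin u) (Set.mem_univ θ) (Set.mem_univ t)
  rw [dotProduct_smul, smul_eq_mul, hnoise_transport] at basic
  simp only [mul_sub, Finset.sum_sub_distrib]
  linarith [mul_le_mul_of_nonneg_left hnoise_le hσ]

/-- basic deterministic Lasso inequality on the noise event. -/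
theorem stmt_6 {n p : ℕ} (Q : Matrix (Fin n) (Fin n) ℝ) (hQ : IsUnit Q.det)
    (Φ : Matrix (Fin n) (Fin p) ℝ) (hΦ : IsUnit (Φ * Φᵀ).det)
    (Ψ : Matrix (Fin n) (Fin p) ℝ) (hΨ : Ψ = Q * (Qᵀ * Q)⁻¹ * Φ)
    (ν : Fin p → ℝ) (hν : ∀ j, ν j = Real.sqrt (sqNorm (fun i => Ψ i j)))
    (f η : Fin n → ℝ) (σ : ℝ) (hσ : 0 < σ) (τ : ℝ) (hτ : 0 < τ)
    (y z : Fin n → ℝ) (hy : y = Q.mulVec f + σ • η)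
    (hz : z = ((Φ * Φᵀ)⁻¹ * Φ * Ψᵀ).mulVec y)
    (α : ℝ) (hα : α ≥ σ * Real.sqrt (2 * (τ + 1) * Real.log p))
    (θ : Fin p → ℝ)
    (hmin : ∀ t : Fin p → ℝ,
      sqNorm (Φ.mulVec θ - z) + 2 * α * ∑ j, ν j * |θ j| ≤
        sqNorm (Φ.mulVec t - z) + 2 * α * ∑ j, ν j * |t j|)
    (hnoise : ∀ j : Fin p,
      |(fun i => Ψ i j) ⬝ᵥ η| ≤ ν j * Real.sqrt (2 * (τ + 1) * Real.log p)) :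
    ∀ t : Fin p → ℝ,
      sqNorm (Φ.mulVec θ - f) + sqNorm (Φ.mulVec (θ - t)) ≤
        sqNorm (Φ.mulVec t - f) + 2 * α * ∑ j, ν j * (|t j| - |θ j|) +
          2 * (σ * Real.sqrt (2 * (τ + 1) * Real.log p)) * ∑ j, ν j * |θ j - t j| := by
  have hQ_gram : IsUnit (Qᵀ * Q).det := by
    rw [det_mul, det_transpose]
    exact hQ.mul hQ
  have hν_nonneg : ∀ j, 0 ≤ ν j := fun j ↦ hν j ▸ Real.sqrt_nonneg _
  exact stmt_6_general Q hQ_gram Φ hΦ Ψ hΨ ν hν_nonneg f η σ hσ.le y z hy hz α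
    ((mul_nonneg hσ.le (Real.sqrt_nonneg _)).trans hα) θ hmin _ hnoise
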